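/- arXiv:1602.06445 — 2 statements merged into one kernel-verified Lean document; each statement's English description precedes it below -/
import Mathlib

section
/- For every real number t with −1 < t ≤ 1, the quotient A_n(t)/B_n(t) converges to log(1+t) as n → ∞ (in particular B_n(t) ≠ 0 for all sufficiently large n). -/
open Finset Filter

/-- `Bₙ(t) = ∑_{k=0}^n C(n,k) C(n+k,k) t^{n−k}`. -/
noncomputable def Blog (t : ℝ) (n : ℕ) : ℝ :=
  ∑ k ∈ range (n + 1), (Nat.choose n k : ℝ) * (Nat.choose (n + k) k : ℝ) * t ^ (n - k)

/-- `cₖ(t) = ∑_{m=1}^k (−1)^{m−1} t^m/m`. -/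
noncomputable def clog (t : ℝ) (k : ℕ) : ℝ :=
  ∑ m ∈ Icc 1 k, (-1 : ℝ) ^ (m - 1) * t ^ m / m

/-- `Aₙ(t) = ∑_{k=0}^n C(n,k) C(n+k,k) t^{n−k} cₖ(t)`. -/
noncomputable def Alog (t : ℝ) (n : ℕ) : ℝ :=
  ∑ k ∈ range (n + 1),
    (Nat.choose n k : ℝ) * (Nat.choose (n + k) k : ℝ) * t ^ (n - k) * clog t k

lemma clog_zero' (t : ℝ) : clog t 0 = 0 := by simp [clog]

lemma clog_succ' (t : ℝ) (k : ℕ) :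
    clog t (k + 1) = clog t k + (-1) ^ k * t ^ (k + 1) / ((k : ℝ) + 1) := by
  unfold clog
  rw [Finset.sum_Icc_succ_top (by omega)]
  simp

lemma clog_hasDerivAt (k : ℕ) (x : ℝ) :
    HasDerivAt (fun t => clog t k) (∑ m ∈ range k, (-x) ^ m) x := by
  induction k with
  | zero => simpa [clog] using hasDerivAt_const x (0 : ℝ)
  | succ k ih =>
    have h : (fun t => clog t (k + 1)) =
        fun t => clog t k + (-1) ^ k * t ^ (k + 1) / ((k : ℝ) + 1) := by
      funext t; exact clog_succ' t k
    rw [h, Finset.sum_range_succ]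
    refine ih.add ?_
    have h2 := ((hasDerivAt_pow (k + 1) x).const_mul ((-1 : ℝ) ^ k)).div_const ((k : ℝ) + 1)
    refine h2.congr_deriv ?_
    have : (k : ℝ) + 1 ≠ 0 := by positivity
    rw [neg_pow x]
    push_cast
    field_simp

lemma clog_neg (s : ℝ) (k : ℕ) :
    clog (-s) k = - ∑ i ∈ range k, s ^ (i + 1) / ((i : ℝ) + 1) := by
  induction k with
  | zero => simp [clog]
  | succ k ih =>
    rw [clog_succ', ih, Finset.sum_range_succ, neg_pow s, pow_succ (-1 : ℝ)]
    have h : ((-1 : ℝ) ^ k) * (-1) ^ k = 1 := by rw [← mul_pow]; simp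
    linear_combination -(s ^ (k + 1) / ((k : ℝ) + 1)) * h

lemma log_sub_clog_abs_le (t : ℝ) (h0 : 0 ≤ t) (h1 : t ≤ 1) (k : ℕ) :
    |Real.log (1 + t) - clog t k| ≤ 1 / ((k : ℝ) + 1) := by
  have hd : ∀ x : ℝ, 0 ≤ x → HasDerivAt (fun t => Real.log (1 + t) - clog t k)
      ((-x) ^ k / (1 + x)) x := by
    intro x hx
    have hx1 : (1 + x) ≠ 0 := by positivity
    have h3 := (((hasDerivAt_id x).const_add 1).log hx1).sub (clog_hasDerivAt k x)
    refine h3.congr_deriv ?_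
    rw [geom_sum_eq (by linarith)]
    have : -x - 1 ≠ 0 := by intro h; apply hx1; linarith
    simp only [id]
    field_simp
    ring
  have key := image_norm_le_of_norm_deriv_right_le_deriv_boundary
    (f := fun t => Real.log (1 + t) - clog t k) (f' := fun x => (-x) ^ k / (1 + x))
    (a := 0) (b := 1) (B := fun x => x ^ (k + 1) / ((k : ℝ) + 1)) (B' := fun x => x ^ k)
    (fun x hx => (hd x hx.1).continuousAt.continuousWithinAt)
    (fun x hx => (hd x hx.1).hasDerivWithinAt)
    (by
      have h := clog_neg 0 k
      simp at h
      simp [h])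
    (by
      intro x
      have h2 := (hasDerivAt_pow (k + 1) x).div_const ((k : ℝ) + 1)
      refine h2.congr_deriv ?_
      have : (k : ℝ) + 1 ≠ 0 := by positivity
      push_cast
      field_simp)
    (by
      intro x hx
      have hx0 := hx.1
      simp only [Real.norm_eq_abs, abs_div, abs_pow, abs_neg, abs_of_nonneg hx0]
      rw [abs_of_nonneg (by linarith : (0 : ℝ) ≤ 1 + x)]
      exact div_le_self (by positivity) (by linarith))
    (x := t) ⟨h0, h1⟩
  rw [Real.norm_eq_abs] at key
  refine key.trans ?_
  gcongr
  exact pow_le_one₀ h0 h1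

lemma err_eq (t : ℝ) (n : ℕ) (L : ℝ) : Blog t n * L - Alog t n =
    ∑ k ∈ range (n + 1), (Nat.choose n k : ℝ) * (Nat.choose (n + k) k : ℝ) * t ^ (n - k)
      * (L - clog t k) := by
  unfold Blog Alog
  rw [Finset.sum_mul, ← Finset.sum_sub_distrib]
  exact Finset.sum_congr rfl fun k _ => by ring

lemma finish (t L : ℝ) (ε : ℕ → ℝ) (hε : Tendsto ε atTop (nhds 0))
    (hB : ∀ᶠ n in atTop, 0 < Blog t n)
    (hR : ∀ᶠ n in atTop, |Blog t n * L - Alog t n| ≤ ε n * Blog t n) :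
    (∀ᶠ n in atTop, Blog t n ≠ 0) ∧
    Tendsto (fun n : ℕ => Alog t n / Blog t n) atTop (nhds L) := by
  refine ⟨hB.mono fun n h => h.ne', ?_⟩
  rw [tendsto_iff_norm_sub_tendsto_zero]
  refine squeeze_zero' (Eventually.of_forall fun n => norm_nonneg _) ?_ hε
  filter_upwards [hB, hR] with n h1 h2
  have : Alog t n / Blog t n - L = -((Blog t n * L - Alog t n) / Blog t n) := by
    field_simp; ring
  rw [this, norm_neg, Real.norm_eq_abs, abs_div, abs_of_pos h1, div_le_iff₀ h1]
  exact h2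

lemma choose_r1 (n k : ℕ) :
    ((n.choose (k + 1) : ℕ) : ℝ) = (n.choose k : ℝ) * ((n : ℝ) - k) / ((k : ℝ) + 1) := by
  have h := Nat.choose_succ_right_eq n k
  rw [eq_div_iff (by positivity)]
  rcases le_or_gt k n with hk | hk
  · have h' : ((n.choose (k + 1) * (k + 1) : ℕ) : ℝ) = ((n.choose k * (n - k) : ℕ) : ℝ) := by
      rw [h]
    push_cast [Nat.cast_sub hk] at h'
    exact h'
  · simp [Nat.choose_eq_zero_of_lt hk, Nat.choose_eq_zero_of_lt (by omega : n < k + 1)]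

lemma choose_r2 (n k : ℕ) :
    (((n + (k + 1)).choose (k + 1) : ℕ) : ℝ) =
      ((n + k).choose k : ℝ) * ((n : ℝ) + k + 1) / ((k : ℝ) + 1) := by
  have h := Nat.add_one_mul_choose_eq (n + k) k
  rw [eq_div_iff (by positivity)]
  have h' : (((n + k + 1) * (n + k).choose k : ℕ) : ℝ) =
    (((n + k + 1).choose (k + 1) * (k + 1) : ℕ) : ℝ) := by rw [h]
  push_cast at h'
  rw [← add_assoc, ← h']; ring

lemma choose_r3 (n k : ℕ) (hk : k ≤ n + 1) :
    ((n.choose k : ℕ) : ℝ) = ((n + 1).choose k : ℝ) * ((n : ℝ) + 1 - k) / ((n : ℝ) + 1) := by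
  have h := Nat.choose_mul_succ_eq n k
  rw [eq_div_iff (by positivity)]
  have h' : ((n.choose k * (n + 1) : ℕ) : ℝ) = (((n + 1).choose k * (n + 1 - k) : ℕ) : ℝ) := by
    rw [h]
  push_cast [Nat.cast_sub hk] at h'
  exact h'

lemma choose_r4 (n k : ℕ) :
    (((n + 1 + k).choose k : ℕ) : ℝ) =
      ((n + k).choose k : ℝ) * ((n : ℝ) + k + 1) / ((n : ℝ) + 1) := by
  have h := Nat.choose_mul_succ_eq (n + k) k
  rw [eq_div_iff (by positivity)]
  have e : n + k + 1 - k = n + 1 := by omega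
  rw [e] at h
  have h' : (((n + k).choose k * (n + k + 1) : ℕ) : ℝ) =
    (((n + k + 1).choose k * (n + 1) : ℕ) : ℝ) := by rw [h]
  push_cast at h'
  rw [show n + 1 + k = n + k + 1 by ring, ← h']

/-- The case `0 ≤ t ≤ 1`. -/
lemma err_pos (t : ℝ) (h0 : 0 ≤ t) (h1 : t ≤ 1) (n : ℕ) (hn : 1 ≤ n) :
    |Blog t n * Real.log (1 + t) - Alog t n| ≤ (2 / Real.sqrt n) * Blog t n := by
  set w : ℕ → ℝ := fun k => (Nat.choose n k : ℝ) * (Nat.choose (n + k) k : ℝ) * t ^ (n - k)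
    with hw
  have hw0 : ∀ k, 0 ≤ w k := fun k => by simp only [hw]; positivity
  have hn0 : (1 : ℝ) ≤ n := by exact_mod_cast hn
  have hs : 0 < Real.sqrt n := Real.sqrt_pos.mpr (by linarith)
  have hss : Real.sqrt n * Real.sqrt n = n := Real.mul_self_sqrt (by linarith)
  have hwn : w (n + 1) = 0 := by simp [hw]
  -- ratio bound
  have hr : ∀ k, k < n → w k * n ≤ w (k + 1) * ((k : ℝ) + 1) ^ 2 := by
    intro k hk
    have hk' : (k : ℝ) + 1 ≤ n := by exact_mod_cast hk
    simp only [hw]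
    rw [choose_r1, choose_r2]
    have e : n - k = (n - (k + 1)) + 1 := by omega
    rw [e, pow_succ]
    set p := (n.choose k : ℝ)
    set q := ((n + k).choose k : ℝ)
    have hp : 0 ≤ p := by positivity
    have hq : 0 ≤ q := by positivity
    set T := t ^ (n - (k + 1))
    have hT : 0 ≤ T := by positivity
    have : p * ((n : ℝ) - k) / (k + 1) * (q * (n + k + 1) / (k + 1)) * T * ((k : ℝ) + 1) ^ 2
      = (p * q * T) * (((n : ℝ) - k) * (n + k + 1)) := by
      field_simp
    rw [this]
    have : p * q * (T * t) * n = (p * q * T) * (t * n) := by ring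
    rw [this]
    apply mul_le_mul_of_nonneg_left _ (by positivity)
    have : (0 : ℝ) ≤ k := by positivity
    nlinarith
  have hterm : ∀ k ∈ range (n + 1), w k / ((k : ℝ) + 1) ≤ (w k + w (k + 1)) / Real.sqrt n := by
    intro k hk
    have hk1 : 0 < (k : ℝ) + 1 := by positivity
    rcases le_or_gt (Real.sqrt n) ((k : ℝ) + 1) with h | h
    · calc w k / ((k : ℝ) + 1) ≤ w k / Real.sqrt n :=
          div_le_div_of_nonneg_left (hw0 k) hs h
        _ ≤ _ := by gcongr; linarith [hw0 (k + 1)]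
    · have hkn : k < n := by
        have : (k : ℝ) < n := by nlinarith
        exact_mod_cast this
      have := hr k hkn
      calc w k / ((k : ℝ) + 1) ≤ w (k + 1) / Real.sqrt n := by
            rw [div_le_div_iff₀ hk1 hs]
            have a1 : w (k + 1) * ((k : ℝ) + 1) ^ 2 ≤ w (k + 1) * (k + 1) * Real.sqrt n := by
              have := mul_le_mul_of_nonneg_left h.le (mul_nonneg (hw0 (k + 1)) hk1.le)
              nlinarith
            have a2 : (w k * Real.sqrt n) * Real.sqrt n ≤
                w (k + 1) * (k + 1) * Real.sqrt n := by
              rw [mul_assoc, hss]; linarith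
            exact le_of_mul_le_mul_right a2 hs
        _ ≤ _ := by gcongr; linarith [hw0 k]
  have hB : Blog t n = ∑ k ∈ range (n + 1), w k := rfl
  have hB2 : ∑ k ∈ range (n + 1), w (k + 1) ≤ Blog t n := by
    have := Finset.sum_range_succ' w (n + 1)
    rw [Finset.sum_range_succ, hwn] at this
    rw [hB]; linarith [hw0 0]
  rw [err_eq]
  calc _ ≤ ∑ k ∈ range (n + 1), |w k * (Real.log (1 + t) - clog t k)| :=
        Finset.abs_sum_le_sum_abs _ _
    _ ≤ ∑ k ∈ range (n + 1), (w k + w (k + 1)) / Real.sqrt n := by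
        refine Finset.sum_le_sum fun k hk => le_trans ?_ (hterm k hk)
        rw [abs_mul, abs_of_nonneg (hw0 k), div_eq_mul_one_div]
        exact mul_le_mul_of_nonneg_left (log_sub_clog_abs_le t h0 h1 k) (hw0 k)
    _ = (Blog t n + ∑ k ∈ range (n + 1), w (k + 1)) / Real.sqrt n := by
        rw [← Finset.sum_div, Finset.sum_add_distrib, hB]
    _ ≤ _ := by
        rw [div_mul_eq_mul_div]
        gcongr
        linarith

/-- Partial fraction sums. -/
noncomputable def Dlog (n : ℕ) (m : ℝ) : ℝ :=
  ∑ k ∈ range (n + 1), (-1) ^ k * (Nat.choose n k : ℝ) * (Nat.choose (n + k) k : ℝ) / (m + k)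

lemma Dlog_tele (n : ℕ) (m : ℝ) (hm : 0 < m) (K : ℕ) (hK : K ≤ n + 2) :
    ∑ k ∈ range K, ((m + n + 1) *
        ((-1) ^ k * ((n + 1).choose k : ℝ) * ((n + 1 + k).choose k : ℝ) / (m + k))
      - (n + 1 - m) * ((-1) ^ k * (n.choose k : ℝ) * ((n + k).choose k : ℝ) / (m + k)))
    = - (2 * (-1) ^ K * (K : ℝ) ^ 2 * ((n + 1).choose K : ℝ) * ((n + K).choose K : ℝ)
        / ((n : ℝ) + 1) ^ 2) := by
  induction K with
  | zero => simp
  | succ k ih =>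
    rw [Finset.sum_range_succ, ih (by omega), choose_r1 (n + 1) k, choose_r2 n k,
      choose_r3 n k (by omega), choose_r4 n k]
    have : m + k ≠ 0 := by positivity
    push_cast
    field_simp
    ring

lemma Dlog_succ (n : ℕ) (m : ℝ) (hm : 0 < m) :
    (m + n + 1) * Dlog (n + 1) m = (n + 1 - m) * Dlog n m := by
  have h := Dlog_tele n m hm (n + 2) le_rfl
  rw [Finset.sum_sub_distrib, ← Finset.mul_sum, ← Finset.mul_sum,
    Finset.sum_range_succ (fun k => (-1) ^ k * (n.choose k : ℝ) * ((n + k).choose k : ℝ) / (m + k))]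
    at h
  simp only [Nat.choose_succ_self] at h
  unfold Dlog
  simp only [Nat.cast_zero, mul_zero, zero_mul, zero_div, add_zero, neg_zero] at h
  linarith

lemma Dlog_abs_le (n : ℕ) (m : ℝ) (hm : 1 ≤ m) : |Dlog n m| ≤ 1 := by
  induction n with
  | zero =>
    simp only [Dlog]
    simp
    rw [abs_of_pos (by linarith)]
    exact inv_le_one_of_one_le₀ hm
  | succ n ih =>
    have h := Dlog_succ n m (by linarith)
    have hp : 0 < m + n + 1 := by positivity
    have h2 : (m + n + 1) * |Dlog (n + 1) m| ≤ (m + n + 1) * 1 := by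
      rw [← abs_of_pos hp, ← abs_mul, abs_of_pos hp, h, abs_mul]
      refine mul_le_mul ?_ ih (abs_nonneg _) hp.le
      rw [abs_le]; constructor <;> linarith [(Nat.cast_nonneg n : (0 : ℝ) ≤ n)]
    exact le_of_mul_le_mul_left h2 hp

lemma log_tail (s : ℝ) (h0 : 0 < s) (h1 : s < 1) (k : ℕ) :
    HasSum (fun j : ℕ => -(s ^ (k + (j + 1)) / ((j : ℝ) + 1 + k)))
      (Real.log (1 + -s) - clog (-s) k) := by
  have h := Real.hasSum_pow_div_log_of_abs_lt_one (x := s) (by rwa [abs_of_pos h0])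
  have h2 := ((hasSum_nat_add_iff' k).mpr h).neg
  rw [clog_neg]
  convert! h2 using 1
  · funext j
    push_cast
    congr 2
    · congr 1; ring
    · ring
  · rw [← sub_eq_add_neg]; ring

lemma err_neg (s : ℝ) (h0 : 0 < s) (h1 : s < 1) (n : ℕ) :
    |Blog (-s) n * Real.log (1 + -s) - Alog (-s) n| ≤ s ^ n * (s / (1 - s)) := by
  rw [err_eq]
  have hsum := hasSum_sum (s := range (n + 1)) fun k _ => (log_tail s h0 h1 k).mul_left
    ((Nat.choose n k : ℝ) * (Nat.choose (n + k) k : ℝ) * (-s) ^ (n - k))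
  have heq : ∀ j : ℕ, ∑ k ∈ range (n + 1),
      (Nat.choose n k : ℝ) * (Nat.choose (n + k) k : ℝ) * (-s) ^ (n - k) *
        -(s ^ (k + (j + 1)) / ((j : ℝ) + 1 + k))
      = -((-1) ^ n * s ^ n * (s * s ^ j) * Dlog n ((j : ℝ) + 1)) := by
    intro j
    unfold Dlog
    rw [Finset.mul_sum, ← Finset.sum_neg_distrib]
    refine Finset.sum_congr rfl fun k hk => ?_
    have hk' : k ≤ n := by simpa [Nat.lt_succ_iff] using hk
    obtain ⟨d, rfl⟩ := Nat.exists_eq_add_of_le hk'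
    rw [Nat.add_sub_cancel_left, neg_pow s d, pow_add (-1 : ℝ)]
    have h : ((-1 : ℝ) ^ k) * (-1) ^ k = 1 := by rw [← mul_pow]; simp
    rw [pow_add s k d, pow_add s k (j + 1), pow_succ s j]
    linear_combination (((k + d).choose k : ℝ) * ((k + d + k).choose k : ℝ) * (-1) ^ d * s ^ d
      * s ^ k * s ^ j * s / ((j : ℝ) + 1 + k)) * h
  have hg : HasSum (fun j : ℕ => s ^ n * (s * s ^ j)) (s ^ n * (s / (1 - s))) := by
    rw [div_eq_mul_inv]
    exact ((hasSum_geometric_of_lt_one h0.le h1).mul_left s).mul_left (s ^ n)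
  rw [← hsum.tsum_eq, ← Real.norm_eq_abs]
  refine tsum_of_norm_bounded hg fun j => ?_
  rw [heq, norm_neg, Real.norm_eq_abs, abs_mul, abs_mul, abs_mul, abs_pow, abs_neg, abs_one,
    one_pow, one_mul, abs_of_nonneg (by positivity : 0 ≤ s ^ n),
    abs_of_nonneg (by positivity : 0 ≤ s * s ^ j)]
  exact mul_le_of_le_one_right (by positivity) (Dlog_abs_le n _ (by simp))

lemma leg_eval (n : ℕ) (x : ℝ) : Polynomial.aeval x (Polynomial.shiftedLegendre n) =
    ∑ k ∈ range (n + 1), (Nat.choose n k : ℝ) * (Nat.choose (n + k) k : ℝ) * (-x) ^ k := by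
  rw [Polynomial.shiftedLegendre, map_sum]
  refine Finset.sum_congr rfl fun k _ => ?_
  rw [neg_pow x, ← Nat.choose_symm_add]
  simp
  ring

lemma Blog_neg_eq (s : ℝ) (h0 : 0 < s) (n : ℕ) : Blog (-s) n =
    s ^ n * ∑ k ∈ range (n + 1),
      (Nat.choose n k : ℝ) * (Nat.choose (n + k) k : ℝ) * ((1 - s) / s) ^ k := by
  have h := Polynomial.shiftedLegendre_eval_symm n (1 / s)
  rw [leg_eval, leg_eval] at h
  have e : -(1 - 1 / s) = (1 - s) / s := by field_simp; ring
  rw [e] at h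
  have hh : ((-1 : ℝ) ^ n) * (-1) ^ n = 1 := by rw [← mul_pow]; simp
  have h2 : Blog (-s) n = (-1) ^ n * s ^ n * ∑ k ∈ range (n + 1),
      (Nat.choose n k : ℝ) * (Nat.choose (n + k) k : ℝ) * (-(1 / s)) ^ k := by
    unfold Blog
    rw [Finset.mul_sum]
    refine Finset.sum_congr rfl fun k hk => ?_
    have hk' : k ≤ n := by simpa [Nat.lt_succ_iff] using hk
    rw [← neg_pow, ← pow_sub_mul_pow (-s) hk']
    have : (-s) ^ k * (-(1 / s)) ^ k = 1 := by
      rw [← mul_pow]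
      have : -s * -(1 / s) = 1 := by field_simp
      rw [this, one_pow]
    linear_combination -((Nat.choose n k : ℝ) * (Nat.choose (n + k) k : ℝ) * (-s) ^ (n - k)) * this
  rw [h2, h]
  linear_combination (s ^ n * ∑ k ∈ range (n + 1),
      (Nat.choose n k : ℝ) * (Nat.choose (n + k) k : ℝ) * ((1 - s) / s) ^ k) * hh

lemma Blog_neg_ge (s : ℝ) (h0 : 0 < s) (h1 : s < 1) (n : ℕ) (hn : 1 ≤ n) :
    s ^ n * (n * ((1 - s) / s)) ≤ Blog (-s) n := by
  rw [Blog_neg_eq s h0]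
  have hp : 0 < (1 - s) / s := div_pos (by linarith) h0
  apply mul_le_mul_of_nonneg_left _ (by positivity)
  have := Finset.single_le_sum (s := range (n + 1)) (f := fun k =>
    (Nat.choose n k : ℝ) * (Nat.choose (n + k) k : ℝ) * ((1 - s) / s) ^ k)
    (fun k _ => by positivity) (Finset.mem_range.mpr (by omega : 1 < n + 1))
  refine le_trans ?_ this
  simp only [Nat.choose_one_right, pow_one]
  apply mul_le_mul_of_nonneg_right _ hp.le
  push_cast
  have : (0 : ℝ) ≤ n := by positivity
  nlinarith

/-- **Convergence of `Aₙ(t)/Bₙ(t)` to `log(1+t)`.**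
For `−1 < t ≤ 1`, the sequence `Aₙ(t)/Bₙ(t)` tends to `log(1+t)`; in particular
`Bₙ(t) ≠ 0` for all sufficiently large `n`. -/
theorem Alog_div_Blog_tendsto_log (t : ℝ) (ht₁ : -1 < t) (ht₂ : t ≤ 1) :
    (∀ᶠ n in atTop, Blog t n ≠ 0) ∧
    Tendsto (fun n : ℕ => Alog t n / Blog t n) atTop (nhds (Real.log (1 + t))) := by
  rcases le_or_gt 0 t with h0 | h0
  · refine finish t _ (fun n => 2 / Real.sqrt n) ?_ ?_ ?_
    · exact (Real.tendsto_sqrt_atTop.comp tendsto_natCast_atTop_atTop).const_div_atTop 2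
    · refine Eventually.of_forall fun n => ?_
      unfold Blog
      refine Finset.sum_pos' (fun k _ => by positivity) ⟨n, by simp, ?_⟩
      have : 0 < (n + n).choose n := Nat.choose_pos (by omega)
      simpa using this
    · filter_upwards [eventually_ge_atTop 1] with n hn
      exact err_pos t h0 ht₂ n hn
  · obtain ⟨s, rfl⟩ : ∃ s, t = -s := ⟨-t, by ring⟩
    have hs0 : 0 < s := by linarith
    have hs1 : s < 1 := by linarith
    have hs2 : 0 < 1 - s := by linarith
    refine finish (-s) _ (fun n : ℕ => (s / (1 - s)) ^ 2 / (n : ℝ)) ?_ ?_ ?_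
    · exact tendsto_natCast_atTop_atTop.const_div_atTop _
    · filter_upwards [eventually_ge_atTop 1] with n hn
      have hn' : (0 : ℝ) < n := by exact_mod_cast hn
      exact lt_of_lt_of_le (by positivity) (Blog_neg_ge s hs0 hs1 n hn)
    · filter_upwards [eventually_ge_atTop 1] with n hn
      have hn' : (0 : ℝ) < n := by exact_mod_cast hn
      refine (err_neg s hs0 hs1 n).trans ?_
      have h := mul_le_mul_of_nonneg_left (Blog_neg_ge s hs0 hs1 n hn)
        (by positivity : 0 ≤ (s / (1 - s)) ^ 2 / (n : ℝ))
      refine le_trans (le_of_eq ?_) h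
      field_simp
end

section
/- Define f(t) := ∑_{n=0}^∞ (B_n(t)·log(1+t) − A_n(t)) for −1 < t ≤ 1. Then f is differentiable on (−1, 1) and satisfies the linear first-order differential equation (3+2t−t²)·f′(t) + (1−t)·f(t) − 3 = 0 for all t ∈ (−1, 1). -/
open Finset Set

/-- The error sum `f(t) = ∑ₙ (Bₙ(t) log(1+t) − Aₙ(t))`. -/
noncomputable def flog (t : ℝ) : ℝ :=
  ∑' n : ℕ, (Blog t n * Real.log (1 + t) - Alog t n)

lemma den_pos {t u : ℝ} (ht : t ∈ Ioo (-1 : ℝ) 1) (hu : u ∈ Set.uIcc (0 : ℝ) 1) :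
    0 < 1 + t * u := by
  rw [Set.uIcc_of_le zero_le_one] at hu
  obtain ⟨h1, h2⟩ := ht
  obtain ⟨h3, h4⟩ := hu
  nlinarith

lemma cont_aux {t : ℝ} (ht : t ∈ Ioo (-1 : ℝ) 1) (g : ℝ → ℝ) (hg : Continuous g) (m : ℕ) :
    IntervalIntegrable (fun u => g u * ((1 + t * u) ^ m)⁻¹) MeasureTheory.volume 0 1 := by
  apply ContinuousOn.intervalIntegrable
  apply ContinuousOn.mul hg.continuousOn
  apply ContinuousOn.inv₀ (by fun_prop)
  intro u hu
  exact pow_ne_zero _ (den_pos ht hu).ne'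

lemma log_int {t : ℝ} (ht : t ∈ Ioo (-1 : ℝ) 1) (k : ℕ) :
    Real.log (1 + t) - clog t k =
      ∫ u in (0 : ℝ)..1, t * (-(t * u)) ^ k * ((1 + t * u) ^ 1)⁻¹ := by
  induction k with
  | zero =>
    have := intervalIntegral.integral_eq_sub_of_hasDerivAt
      (f := fun u : ℝ => Real.log (1 + t * u))
      (f' := fun u : ℝ => t * (-(t * u)) ^ 0 * ((1 + t * u) ^ 1)⁻¹) (a := 0) (b := 1) ?_ ?_
    · rw [this]; simp [clog]
    · intro u hu
      have h1 : HasDerivAt (fun u : ℝ => 1 + t * u) t u := by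
        simpa using ((hasDerivAt_id u).const_mul t).const_add 1
      have := h1.log (den_pos ht hu).ne'
      refine this.congr_deriv ?_
      simp [div_eq_mul_inv]
    · exact cont_aux ht _ (by fun_prop) 1
  | succ k ih =>
    have e : ∫ u in (0 : ℝ)..1, t * (-(t * u)) ^ (k + 1) * ((1 + t * u) ^ 1)⁻¹ =
        ∫ u in (0 : ℝ)..1, (t * (-(t * u)) ^ k * ((1 + t * u) ^ 1)⁻¹
          - (-1) ^ k * t ^ (k + 1) * u ^ k) := by
      apply intervalIntegral.integral_congr
      intro u hu
      have := (den_pos ht hu).ne'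
      have e2 : (-(t * u)) ^ k = (-1) ^ k * t ^ k * u ^ k := by
        rw [neg_pow, mul_pow]; ring
      simp only [pow_succ _ k, e2]
      field_simp
      ring
    rw [e, intervalIntegral.integral_sub (cont_aux ht _ (by fun_prop) 1)
      (Continuous.intervalIntegrable (by fun_prop) _ _), ← ih,
      intervalIntegral.integral_const_mul, integral_pow]
    have : clog t (k + 1) = clog t k + (-1) ^ k * t ^ (k + 1) / (k + 1 : ℕ) := by
      simp [clog, Finset.sum_Icc_succ_top]
    rw [this]
    push_cast
    simp
    ring

open Polynomial in
lemma ibp {t : ℝ} (ht : t ∈ Ioo (-1 : ℝ) 1) (p : ℝ[X]) (h0 : p.eval 0 = 0) (h1 : p.eval 1 = 0)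
    (m : ℕ) :
    ∫ u in (0 : ℝ)..1, (derivative p).eval u * ((1 + t * u) ^ (m + 1))⁻¹ =
      (m + 1) * t * ∫ u in (0 : ℝ)..1, p.eval u * ((1 + t * u) ^ (m + 2))⁻¹ := by
  have := intervalIntegral.integral_eq_sub_of_hasDerivAt
      (f := fun u : ℝ => p.eval u * ((1 + t * u) ^ (m + 1))⁻¹)
      (f' := fun u : ℝ => (derivative p).eval u * ((1 + t * u) ^ (m + 1))⁻¹ -
        (m + 1) * t * (p.eval u * ((1 + t * u) ^ (m + 2))⁻¹)) (a := 0) (b := 1) ?_ ?_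
  · rw [intervalIntegral.integral_sub (cont_aux ht _ (by fun_prop) _)
      ((cont_aux ht _ (by fun_prop) _).const_mul _), intervalIntegral.integral_const_mul] at this
    simp only [h0, h1, zero_mul, sub_zero] at this
    linarith
  · intro u hu
    have hd := (den_pos ht hu).ne'
    have h1 : HasDerivAt (fun u : ℝ => 1 + t * u) t u := by
      simpa using ((hasDerivAt_id u).const_mul t).const_add 1
    have := (p.hasDerivAt u).mul ((h1.pow (m + 1)).inv (pow_ne_zero _ hd))
    refine this.congr_deriv ?_
    simp only [Pi.pow_apply, Pi.inv_apply, Nat.add_sub_cancel]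
    push_cast
    field_simp
    ring
  · exact (cont_aux ht _ (by fun_prop) _).sub ((cont_aux ht _ (by fun_prop) _).const_mul _)

open Polynomial in
lemma ibp_iter {t : ℝ} (ht : t ∈ Ioo (-1 : ℝ) 1) (n j : ℕ) (hj : j ≤ n) :
    ∫ u in (0 : ℝ)..1, (derivative^[n] (X ^ n * (1 - X) ^ n : ℝ[X])).eval u
        * ((1 + t * u) ^ 1)⁻¹ =
      t ^ j * j.factorial * ∫ u in (0 : ℝ)..1,
        (derivative^[n - j] (X ^ n * (1 - X) ^ n : ℝ[X])).eval u * ((1 + t * u) ^ (j + 1))⁻¹ := by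
  induction j with
  | zero => simp
  | succ j ih =>
    rw [ih (by omega)]
    have e : n - j = (n - (j + 1)) + 1 := by omega
    have hr : ∀ q : ℝ[X], ∀ c : ℝ, q.eval c = 0 → q ^ n ∣ (X ^ n * (1 - X) ^ n : ℝ[X]) →
        (derivative^[n - (j + 1)] (X ^ n * (1 - X) ^ n : ℝ[X])).eval c = 0 := by
      intro q c hq hd
      obtain ⟨r, hr⟩ := pow_sub_dvd_iterate_derivative_of_pow_dvd (n - (j + 1)) hd
      rw [hr, eval_mul, eval_pow, hq, zero_pow (by omega), zero_mul]
    rw [e, Function.iterate_succ_apply', ibp ht _ (hr X 0 (by simp) (dvd_mul_right _ _))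
      (hr (1 - X) 1 (by simp) (dvd_mul_left _ _)), Nat.factorial_succ]
    push_cast
    ring

open Polynomial in
lemma legendre_eval (n : ℕ) (u : ℝ) :
    (derivative^[n] (X ^ n * (1 - X) ^ n : ℝ[X])).eval u =
      n.factorial * ∑ k ∈ range (n + 1), (Nat.choose n k : ℝ) * (Nat.choose (n + k) k : ℝ) *
        (-u) ^ k := by
  have h := congrArg (fun p => (p.map (Int.castRingHom ℝ)).eval u)
    (factorial_mul_shiftedLegendre_eq n)
  simp only [← Polynomial.iterate_derivative_map] at h
  simp only [Polynomial.map_mul, Polynomial.map_pow, Polynomial.map_sub, Polynomial.map_X,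
    Polynomial.map_one, Polynomial.map_natCast, eval_mul, eval_natCast] at h
  rw [← h]
  congr 1
  simp only [shiftedLegendre, Polynomial.map_sum, eval_finsetSum]
  refine Finset.sum_congr rfl fun k _ => ?_
  have : (n + k).choose n = (n + k).choose k := Nat.choose_symm_add
  rw [neg_pow u]
  simp [this]
  ring

lemma term_eq {t : ℝ} (ht : t ∈ Ioo (-1 : ℝ) 1) (n : ℕ) :
    Blog t n * Real.log (1 + t) - Alog t n =
      ∫ u in (0 : ℝ)..1, t * (t ^ 2 * (u * (1 - u))) ^ n * ((1 + t * u) ^ (n + 1))⁻¹ := by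
  have e1 : Blog t n * Real.log (1 + t) - Alog t n = ∑ k ∈ range (n + 1),
      (Nat.choose n k : ℝ) * (Nat.choose (n + k) k : ℝ) * t ^ (n - k) *
        (Real.log (1 + t) - clog t k) := by
    simp only [Blog, Alog, Finset.sum_mul, mul_sub, Finset.sum_sub_distrib]
  have e2 : Blog t n * Real.log (1 + t) - Alog t n = ∫ u in (0 : ℝ)..1,
      t ^ (n + 1) * ((∑ k ∈ range (n + 1), (Nat.choose n k : ℝ) * (Nat.choose (n + k) k : ℝ) *
        (-u) ^ k) * ((1 + t * u) ^ 1)⁻¹) := by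
    rw [e1]
    simp only [log_int ht, ← intervalIntegral.integral_const_mul]
    rw [← intervalIntegral.integral_finsetSum]
    · apply intervalIntegral.integral_congr
      intro u hu
      simp only [Finset.sum_mul, Finset.mul_sum]
      refine Finset.sum_congr rfl fun k hk => ?_
      have hk : k ≤ n := by simpa [Nat.lt_succ_iff] using hk
      have : t ^ (n + 1) = t ^ (n - k) * t ^ k * t := by
        rw [← pow_add, Nat.sub_add_cancel hk, pow_succ]
      rw [this, ← mul_neg, mul_pow]
      ring
    · intro k hk
      exact (cont_aux ht _ (by fun_prop) _).const_mul _
  have e3 := ibp_iter ht n n le_rfl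
  simp only [legendre_eval, Nat.sub_self, Function.iterate_zero, id_eq, mul_assoc,
    intervalIntegral.integral_const_mul] at e3
  have hf : (n.factorial : ℝ) ≠ 0 := by positivity
  rw [e2, intervalIntegral.integral_const_mul]
  simp only [mul_assoc]
  rw [mul_left_comm (t ^ n)] at e3
  rw [mul_left_cancel₀ hf e3, ← intervalIntegral.integral_const_mul,
    ← intervalIntegral.integral_const_mul]
  congr 1
  ext u
  simp [mul_pow]
  ring

lemma quad_pos {t u : ℝ} (ht : t ∈ Ioo (-1 : ℝ) 1) :
    0 < 1 + t * u - t ^ 2 * (u * (1 - u)) := by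
  obtain ⟨h1, h2⟩ := ht
  nlinarith [sq_nonneg (2 * t * u + 1 - t)]

lemma flog_int {t : ℝ} (ht : t ∈ Ioo (-1 : ℝ) 1) :
    flog t = ∫ u in (0 : ℝ)..1, t * (1 + t * u - t ^ 2 * (u * (1 - u)))⁻¹ := by
  have ht2 : t ^ 2 < 1 := by
    obtain ⟨h1, h2⟩ := ht
    nlinarith
  unfold flog
  simp only [term_eq ht]
  apply HasSum.tsum_eq
  have key : ∀ u ∈ Set.uIoc (0 : ℝ) 1, 0 < 1 + t * u ∧ 0 ≤ u * (1 - u) ∧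
      u * (1 - u) ≤ 1 + t * u := by
    intro u hu
    rw [Set.uIoc_of_le zero_le_one] at hu
    obtain ⟨h1, h2⟩ := ht
    obtain ⟨h3, h4⟩ := hu
    refine ⟨by nlinarith, by nlinarith, by nlinarith⟩
  have hg : IntervalIntegrable (fun u : ℝ => |t| * ((1 + t * u) ^ 1)⁻¹)
      MeasureTheory.volume 0 1 := cont_aux ht _ continuous_const 1
  have hfact : ∀ n : ℕ, ∀ u ∈ Set.uIoc (0 : ℝ) 1,
      t * (t ^ 2 * (u * (1 - u))) ^ n * ((1 + t * u) ^ (n + 1))⁻¹ =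
      t * (1 + t * u)⁻¹ * (t ^ 2 * (u * (1 - u) / (1 + t * u))) ^ n := by
    intro n u hu
    have := (key u hu).1.ne'
    rw [← mul_div_assoc, div_pow, pow_succ (1 + t * u), mul_inv, div_eq_mul_inv]
    ring
  have hr : ∀ u ∈ Set.uIoc (0 : ℝ) 1, 0 ≤ t ^ 2 * (u * (1 - u) / (1 + t * u)) ∧
      t ^ 2 * (u * (1 - u) / (1 + t * u)) ≤ t ^ 2 := by
    intro u hu
    obtain ⟨h1, h2, h3⟩ := key u hu
    refine ⟨by positivity, ?_⟩
    have : u * (1 - u) / (1 + t * u) ≤ 1 := (div_le_one h1).2 h3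
    nlinarith [sq_nonneg t]
  apply intervalIntegral.hasSum_integral_of_dominated_convergence
    (fun n u => |t| * ((1 + t * u) ^ 1)⁻¹ * (t ^ 2) ^ n)
  · intro n
    have := (cont_aux ht (fun u => t * (t ^ 2 * (u * (1 - u))) ^ n) (by fun_prop) (n + 1))
    exact (intervalIntegrable_iff.1 this).aestronglyMeasurable
  · intro n
    refine MeasureTheory.ae_of_all _ fun u hu => ?_
    obtain ⟨h1, h2, h3⟩ := key u hu
    rw [hfact n u hu, Real.norm_eq_abs, abs_mul, abs_mul, abs_of_pos (inv_pos.2 h1),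
      abs_of_nonneg (pow_nonneg (hr u hu).1 n), pow_one]
    have := pow_le_pow_left₀ (hr u hu).1 (hr u hu).2 n
    gcongr
  · refine MeasureTheory.ae_of_all _ fun u hu => ?_
    exact (summable_geometric_of_lt_one (sq_nonneg t) ht2).mul_left _
  · simp only [tsum_mul_left]
    exact hg.mul_const _
  · refine MeasureTheory.ae_of_all _ fun u hu => ?_
    obtain ⟨h1, h2, h3⟩ := key u hu
    have hs := (hasSum_geometric_of_lt_one (hr u hu).1 ((hr u hu).2.trans_lt ht2)).mul_left
      (t * (1 + t * u)⁻¹)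
    simp only [hfact _ u hu]
    have e : t * (1 + t * u - t ^ 2 * (u * (1 - u)))⁻¹ =
        t * (1 + t * u)⁻¹ * (1 - t ^ 2 * (u * (1 - u) / (1 + t * u)))⁻¹ := by
      rw [mul_assoc, ← mul_inv]
      congr 2
      field_simp
    rw [e]
    exact hs

lemma D_pos {t : ℝ} (ht : t ∈ Ioo (-1 : ℝ) 1) : 0 < 3 + 2 * t - t ^ 2 := by
  obtain ⟨h1, h2⟩ := ht
  nlinarith

lemma flog_closed {t : ℝ} (ht : t ∈ Ioo (-1 : ℝ) 1) :
    flog t = 2 / √(3 + 2 * t - t ^ 2) * (Real.arctan ((1 + t) / √(3 + 2 * t - t ^ 2)) -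
      Real.arctan ((1 - t) / √(3 + 2 * t - t ^ 2))) := by
  have hD := D_pos ht
  have hs := Real.sqrt_pos.2 hD
  have hsq := Real.sq_sqrt hD.le
  rw [flog_int ht]
  set D := √(3 + 2 * t - t ^ 2) with hDdef
  have := intervalIntegral.integral_eq_sub_of_hasDerivAt
      (f := fun u : ℝ => 2 / D * Real.arctan ((2 * t * u + (1 - t)) / D))
      (f' := fun u : ℝ => t * (1 + t * u - t ^ 2 * (u * (1 - u)))⁻¹) (a := 0) (b := 1) ?_ ?_
  · rw [this, mul_sub]
    congr 4
    · ring
    · ring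
  · intro u hu
    have h1 : HasDerivAt (fun u : ℝ => (2 * t * u + (1 - t)) / D) (2 * t / D) u := by
      simpa using (((hasDerivAt_id u).const_mul (2 * t)).add_const (1 - t)).div_const D
    refine (h1.arctan.const_mul (2 / D)).congr_deriv ?_
    have hq := quad_pos (u := u) ht
    have h3 : 1 + ((2 * t * u + (1 - t)) / D) ^ 2 =
        4 * (1 + t * u - t ^ 2 * (u * (1 - u))) / D ^ 2 := by
      field_simp
      rw [hsq]
      ring
    rw [h3]
    field_simp
    ring
  · apply ContinuousOn.intervalIntegrable
    apply ContinuousOn.mul continuousOn_const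
    apply ContinuousOn.inv₀ (by fun_prop)
    intro u hu
    exact (quad_pos ht).ne'

lemma flog_hasDeriv {t : ℝ} (ht : t ∈ Ioo (-1 : ℝ) 1) :
    HasDerivAt flog ((3 - (1 - t) * flog t) / (3 + 2 * t - t ^ 2)) t := by
  have hD := D_pos ht
  have hs := Real.sqrt_pos.2 hD
  have hsq := Real.sq_sqrt hD.le
  have hev : flog =ᶠ[nhds t] fun t => 2 / √(3 + 2 * t - t ^ 2) *
      (Real.arctan ((1 + t) / √(3 + 2 * t - t ^ 2)) -
      Real.arctan ((1 - t) / √(3 + 2 * t - t ^ 2))) := by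
    filter_upwards [isOpen_Ioo.mem_nhds ht] with x hx using flog_closed hx
  refine HasDerivAt.congr_of_eventuallyEq ?_ hev
  rw [flog_closed ht]
  have hp : HasDerivAt (fun t : ℝ => 3 + 2 * t - t ^ 2) (2 - 2 * t) t := by
    refine ((((hasDerivAt_id t).const_mul 2).const_add 3).sub (hasDerivAt_pow 2 t)).congr_deriv ?_
    simp
  have hS := hp.sqrt hD.ne'
  have ha : HasDerivAt (fun t : ℝ => 1 + t) 1 t := by
    simpa using (hasDerivAt_id t).const_add 1
  have hb : HasDerivAt (fun t : ℝ => 1 - t) (-1) t := by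
    simpa using (hasDerivAt_id t).const_sub 1
  have hA := (ha.div hS hs.ne').arctan
  have hB := (hb.div hS hs.ne').arctan
  have h2 := (hasDerivAt_const t (2 : ℝ)).div hS hs.ne'
  have hall := h2.mul (hA.sub hB)
  refine hall.congr_deriv ?_
  simp only [Pi.div_apply, Pi.sub_apply]
  set D := √(3 + 2 * t - t ^ 2) with hDdef
  have h1t : 0 < 1 + t := by linarith [ht.1]
  have e1 : 1 + ((1 + t) / D) ^ 2 = 4 * (1 + t) / D ^ 2 := by
    field_simp
    rw [hsq]; ring
  have e2 : 1 + ((1 - t) / D) ^ 2 = 4 / D ^ 2 := by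
    field_simp
    rw [hsq]; ring
  have d1 : 1 / (1 + ((1 + t) / D) ^ 2) * ((1 * D - (1 + t) * ((2 - 2 * t) / (2 * D))) / D ^ 2)
      = 1 / (2 * D) := by
    rw [e1]
    field_simp
    rw [hsq]; ring
  have d2 : 1 / (1 + ((1 - t) / D) ^ 2) * ((-1 * D - (1 - t) * ((2 - 2 * t) / (2 * D))) / D ^ 2)
      = - 1 / D := by
    rw [e2]
    field_simp
    rw [hsq]; ring
  rw [d1, d2, ← hsq]
  generalize Real.arctan ((1 + t) / D) - Real.arctan ((1 - t) / D) = g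
  field_simp
  ring

/-- **A differential equation for the error sum of `log(1+t)`.**
The function `f(t) = ∑ₙ (Bₙ(t) log(1+t) − Aₙ(t))` is differentiable on `(−1,1)` and
satisfies `(3+2t−t²) f′(t) + (1−t) f(t) − 3 = 0` there. -/
theorem error_sum_log_ode :
    ∀ t ∈ Ioo (-1 : ℝ) 1,
      DifferentiableAt ℝ flog t ∧
      (3 + 2 * t - t ^ 2) * deriv flog t + (1 - t) * flog t - 3 = 0 := by
  intro t ht
  have h := flog_hasDeriv ht
  refine ⟨h.differentiableAt, ?_⟩
  rw [h.deriv]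
  have := (D_pos ht).ne'
  field_simp
  ring
end
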